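/- Let k ≥ 0 be an integer and G = (V,Σ,P,S) a reduced LR(k)-grammar. If two LR(k)-items [A → β·, u] and [A' → β'·, u] with the same lookahead u ∈ Σ^{≤k} are both valid for the same string γ ∈ V*, then A = A' and β = β' (i.e., for each γ and u there is at most one valid complete LR(k)-item). -/

import Mathlib

/-!
Formalization framework for context-free grammars with distinguished
terminal type `T` and nonterminal type `N`.

* `CFG T N` : a context-free grammar `G = (V, Σ, P, S)` where
  `V = Symbol T N`, `Σ = T`, `N` the nonterminals, `P = G.rules`, `S = G.start`.
* `CFG.Derives` : the (unrestricted) derivation relation `⇒*`.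
* `CFG.RmDerives` : the rightmost derivation relation `⇒*_rm`.
* `CFG.LmStep` : one leftmost derivation step.
* `CFG.FirstK G k α` : the set `FIRST_k(α)`.
* `CFG.Reduced` : `G` is reduced.
* `CFG.IsLR G k` : `G` is an `LR(k)`-grammar.
* `CFG.ValidItem G k A β₁ β₂ u γ` : the `LR(k)`-item `[A → β₁·β₂, u]`
  is valid for the string `γ` (so that `γ = α ++ β₁` for some `α`).
-/

/-- A context-free grammar with terminals `T`, nonterminals `N`,
a set of productions and a start symbol. -/
structure CFG (T N : Type) where
  /-- the set `P` of productions `A → α` -/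
  rules : Set (N × List (Symbol T N))
  /-- the start symbol `S` -/
  start : N

namespace CFG

variable {T N : Type}

/-- One (unrestricted) derivation step `α ⇒ β`. -/
def Step (G : CFG T N) (α β : List (Symbol T N)) : Prop :=
  ∃ (A : N) (δ φ ψ : List (Symbol T N)),
    (A, δ) ∈ G.rules ∧ α = φ ++ [Symbol.nonterminal A] ++ ψ ∧ β = φ ++ δ ++ ψ

/-- The derivation relation `α ⇒* β`. -/
def Derives (G : CFG T N) : List (Symbol T N) → List (Symbol T N) → Prop :=
  Relation.ReflTransGen G.Step

/-- One rightmost derivation step `α ⇒_rm β`: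
the rewritten nonterminal is followed only by terminals. -/
def RmStep (G : CFG T N) (α β : List (Symbol T N)) : Prop :=
  ∃ (A : N) (δ φ : List (Symbol T N)) (w : List T),
    (A, δ) ∈ G.rules ∧ α = φ ++ [Symbol.nonterminal A] ++ w.map Symbol.terminal ∧
      β = φ ++ δ ++ w.map Symbol.terminal

/-- The rightmost derivation relation `α ⇒*_rm β`. -/
def RmDerives (G : CFG T N) : List (Symbol T N) → List (Symbol T N) → Prop :=
  Relation.ReflTransGen G.RmStep

/-- One leftmost derivation step `α ⇒_lm β`:
the rewritten nonterminal is preceded only by terminals. -/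
def LmStep (G : CFG T N) (α β : List (Symbol T N)) : Prop :=
  ∃ (A : N) (δ ψ : List (Symbol T N)) (w : List T),
    (A, δ) ∈ G.rules ∧ α = w.map Symbol.terminal ++ [Symbol.nonterminal A] ++ ψ ∧
      β = w.map Symbol.terminal ++ δ ++ ψ

/-- `FIRST_k(α) = {x ∈ Σ* ∣ α ⇒* xy, (y ∈ Σ⁺ ∧ |x| = k) ∨ (y = ε ∧ |x| ≤ k)}`. -/
def FirstK (G : CFG T N) (k : ℕ) (α : List (Symbol T N)) : Set (List T) :=
  { x | ∃ y : List T,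
      G.Derives α ((x ++ y).map Symbol.terminal) ∧
      ((y ≠ [] ∧ x.length = k) ∨ (y = [] ∧ x.length ≤ k)) }

/-- `G` is reduced: `P = ∅` or every symbol `X ∈ V` occurs in a derivation
`S ⇒* αXβ ⇒* w` of a terminal word. -/
def Reduced (G : CFG T N) : Prop :=
  G.rules = ∅ ∨ ∀ X : Symbol T N, ∃ (α β : List (Symbol T N)) (w : List T),
    G.Derives [Symbol.nonterminal G.start] (α ++ [X] ++ β) ∧
    G.Derives (α ++ [X] ++ β) (w.map Symbol.terminal)

/-- `G` is `LR(k)`: whenever `S ⇒*_rm αAw ⇒_rm αβw` and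
`S ⇒*_rm γBx ⇒_rm γδx = αβy` with `FIRST_k(w) = FIRST_k(y)`,
then `α = γ`, `A = B` and `x = y`. -/
def IsLR (G : CFG T N) (k : ℕ) : Prop :=
  ∀ (α β γ δ : List (Symbol T N)) (A B : N) (w x y : List T),
    G.RmDerives [Symbol.nonterminal G.start]
      (α ++ [Symbol.nonterminal A] ++ w.map Symbol.terminal) →
    (A, β) ∈ G.rules →
    G.RmDerives [Symbol.nonterminal G.start]
      (γ ++ [Symbol.nonterminal B] ++ x.map Symbol.terminal) →
    (B, δ) ∈ G.rules →
    γ ++ δ ++ x.map Symbol.terminal = α ++ β ++ y.map Symbol.terminal →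
    G.FirstK k (w.map Symbol.terminal) = G.FirstK k (y.map Symbol.terminal) →
    α = γ ∧ A = B ∧ x = y

/-- The `LR(k)`-item `[A → β₁·β₂, u]` is valid for `γ = α ++ β₁` if there is a
rightmost derivation `S ⇒*_rm αAw ⇒_rm αβ₁β₂w` with `u ∈ FIRST_k(β₂w)`,
where `u ∈ Σ^{≤k}`. -/
def ValidItem (G : CFG T N) (k : ℕ) (A : N) (β₁ β₂ : List (Symbol T N)) (u : List T)
    (γ : List (Symbol T N)) : Prop :=
  u.length ≤ k ∧ (A, β₁ ++ β₂) ∈ G.rules ∧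
  ∃ (α : List (Symbol T N)) (w : List T),
    γ = α ++ β₁ ∧
    G.RmDerives [Symbol.nonterminal G.start]
      (α ++ [Symbol.nonterminal A] ++ w.map Symbol.terminal) ∧
    u ∈ G.FirstK k (β₂ ++ w.map Symbol.terminal)

end CFG

/-!
A word of terminals derives nothing but itself, so `FIRST_k(w) = {w.take k}`, and the lookahead of
a complete item made valid by `S ⇒*_rm αAw` is the prefix `w.take k`. Two complete items valid for
the same `γ` with the same lookahead therefore come from right sentential forms `αβw = γw` and
`α'β'w' = γw'` with `FIRST_k(w) = FIRST_k(w')`. Reading the second form as `αβw'` puts the two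
derivations in the situation of the `LR(k)` condition, which gives `α = α'` and `A = A'`; cancelling
`α` from `γ = αβ = αβ'` leaves `β = β'`.
-/

namespace CFG

variable {T N : Type} {G : CFG T N} {k : ℕ}

theorem not_step_map_terminal (w : List T) (β : List (Symbol T N)) :
    ¬ G.Step (w.map Symbol.terminal) β := by
  rintro ⟨A, δ, φ, ψ, -, hw, -⟩
  have hA : Symbol.nonterminal A ∈ w.map (Symbol.terminal (N := N)) := by simp [hw]
  simp at hA

theorem derives_map_terminal_iff {w : List T} {β : List (Symbol T N)} :
    G.Derives (w.map Symbol.terminal) β ↔ β = w.map Symbol.terminal :=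
  Relation.reflTransGen_iff_eq (not_step_map_terminal w)

theorem derives_map_terminal_map_terminal_iff {v w : List T} :
    G.Derives (w.map Symbol.terminal) (v.map Symbol.terminal) ↔ v = w := by
  have terminal_injective : Function.Injective (Symbol.terminal (T := T) (N := N)) :=
    fun _ _ h ↦ Symbol.terminal.inj h
  rw [derives_map_terminal_iff, terminal_injective.list_map.eq_iff]

theorem firstK_map_terminal (w : List T) : G.FirstK k (w.map Symbol.terminal) = {w.take k} := by
  ext x
  simp only [FirstK, derives_map_terminal_map_terminal_iff, Set.mem_ofPred_eq,
    Set.mem_singleton_iff]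
  constructor
  · rintro ⟨y, rfl, ⟨-, rfl⟩ | ⟨rfl, hx⟩⟩
    · exact List.take_left.symm
    · rw [List.append_nil, List.take_of_length_le hx]
  · rintro rfl
    refine ⟨w.drop k, List.take_append_drop k w, ?_⟩
    rcases lt_or_ge k w.length with hk | hk
    · exact .inl ⟨by simpa using hk, List.length_take_of_le hk.le⟩
    · exact .inr ⟨List.drop_of_length_le hk, List.length_take_le k w⟩

theorem validItem_nil_iff {A : N} {β γ : List (Symbol T N)} {u : List T} :
    G.ValidItem k A β [] u γ ↔
      (A, β) ∈ G.rules ∧ ∃ (α : List (Symbol T N)) (w : List T), γ = α ++ β ∧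
        G.RmDerives [Symbol.nonterminal G.start]
          (α ++ [Symbol.nonterminal A] ++ w.map Symbol.terminal) ∧
        u = w.take k := by
  simp only [ValidItem, List.append_nil, List.nil_append, firstK_map_terminal,
    Set.mem_singleton_iff, and_iff_right_iff_imp]
  rintro ⟨-, α, w, -, -, rfl⟩
  exact List.length_take_le k w

theorem IsLR.handle_unique (hlr : G.IsLR k) {A A' : N} {α α' β β' : List (Symbol T N)}
    {w w' : List T} (hrule : (A, β) ∈ G.rules) (hrule' : (A', β') ∈ G.rules)
    (hder : G.RmDerives [Symbol.nonterminal G.start]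
      (α ++ [Symbol.nonterminal A] ++ w.map Symbol.terminal))
    (hder' : G.RmDerives [Symbol.nonterminal G.start]
      (α' ++ [Symbol.nonterminal A'] ++ w'.map Symbol.terminal))
    (hprefix : α ++ β = α' ++ β') (hlookahead : w.take k = w'.take k) :
    α = α' ∧ A = A' ∧ β = β' := by
  have hfirst : G.FirstK k (w.map Symbol.terminal) = G.FirstK k (w'.map Symbol.terminal) := by
    rw [firstK_map_terminal, firstK_map_terminal, hlookahead]
  obtain ⟨rfl, hA, -⟩ := hlr α β α' β' A A' w w' w' hder hrule hder' hrule' (by rw [hprefix]) hfirst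
  exact ⟨rfl, hA, List.append_cancel_left hprefix⟩

end CFG

theorem statement_10_general {T N : Type} {G : CFG T N} {k : ℕ} (hlr : G.IsLR k)
    {A A' : N} {β β' γ : List (Symbol T N)} {u : List T}
    (h1 : G.ValidItem k A β [] u γ) (h2 : G.ValidItem k A' β' [] u γ) :
    A = A' ∧ β = β' := by
  obtain ⟨hrule, α, w, hγ, hder, hu⟩ := CFG.validItem_nil_iff.mp h1
  obtain ⟨hrule', α', w', hγ', hder', hu'⟩ := CFG.validItem_nil_iff.mp h2
  exact (hlr.handle_unique hrule hrule' hder hder' (hγ.symm.trans hγ') (hu.symm.trans hu')).2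

/-- For a reduced `LR(k)`-grammar `G`: if two complete `LR(k)`-items
`[A → β·, u]` and `[A' → β'·, u]` with the same lookahead `u ∈ Σ^{≤k}` are both valid
for the same string `γ ∈ V*`, then `A = A'` and `β = β'`. -/
theorem statement_10 {T N : Type} (G : CFG T N) (k : ℕ)
    (hred : G.Reduced) (hlr : G.IsLR k)
    (A A' : N) (β β' : List (Symbol T N)) (u : List T) (γ : List (Symbol T N))
    (h1 : G.ValidItem k A β [] u γ)
    (h2 : G.ValidItem k A' β' [] u γ) :
    A = A' ∧ β = β' :=
  statement_10_general hlr h1 h2
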